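/- Let n : ℕ and let ⟨·,·⟩ denote the Minkowski bilinear form on ℝ^{n+1}. Suppose K, D, F, Γ : Fin (n+1) → ℝ satisfy ⟨K,K⟩ = −2, ⟨K,D⟩ = 2, ⟨D,D⟩ = 14, ⟨K,F⟩ = −2, ⟨D,F⟩ = 8, ⟨F,F⟩ = 0, ⟨K,Γ⟩ = 2, ⟨D,Γ⟩ = 4, ⟨F,Γ⟩ = 4 and ⟨Γ,Γ⟩ = 0. Then 2·K + Γ = F. -/

import Mathlib

/-- The Minkowski (Lorentzian) bilinear form on `ℝ^{n+1}`:
`⟨x, y⟩ = x 0 * y 0 - ∑_{i=1}^{n} x i * y i`. -/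
def mink (n : ℕ) (x y : Fin (n + 1) → ℝ) : ℝ :=
  x 0 * y 0 - ∑ i ∈ Finset.Ioi (0 : Fin (n + 1)), x i * y i

/-!
Put `Z = 2K + Γ - F`. The isotropic classes `F` and `Γ` are both orthogonal to `Z`, and their sum
has positive square `2⟨F, Γ⟩ = 8`. Since `⟨Z, Z⟩ = 0`, the Hodge index property forces `Z = 0`.
For the Minkowski form this property follows from the Cauchy–Schwarz inequality in the space-like
coordinates.
-/

section HodgeIndex

variable {R V : Type*} [CommRing R] [PartialOrder R] [AddCommGroup V] [Module R V]

/-- The conclusion of the Hodge index theorem, as a property of a symmetric bilinear form: the form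
is negative definite on the orthogonal complement of every vector of positive square. The scalars
are an ordered ring, so that both intersection forms on lattices and real forms are covered; a form
without vectors of positive square is allowed. -/
structure HasHodgeIndex (B : LinearMap.BilinForm R V) : Prop where
  isSymm : B.IsSymm
  neg_of_orthogonal : ∀ ⦃h z : V⦄, 0 < B h h → B h z = 0 → z ≠ 0 → B z z < 0

namespace HasHodgeIndex

variable {B : LinearMap.BilinForm R V}

theorem eq_zero_of_orthogonal (hB : HasHodgeIndex B) {h z : V} (hh : 0 < B h h)
    (hhz : B h z = 0) (hz : B z z = 0) : z = 0 := by
  by_contra hne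
  exact (hB.neg_of_orthogonal hh hhz hne).ne hz

theorem eq_zero_of_orthogonal_isotropic_pair [IsOrderedAddMonoid R] (hB : HasHodgeIndex B)
    {e f z : V} (he : B e e = 0) (hf : B f f = 0) (hef : 0 < B e f)
    (hez : B e z = 0) (hfz : B f z = 0) (hz : B z z = 0) : z = 0 := by
  have hpos : 0 < B (e + f) (e + f) := by
    have hsq : B (e + f) (e + f) = B e f + B e f := by
      simp only [map_add, LinearMap.add_apply, he, hf, hB.isSymm.eq f e, zero_add, add_zero]
    rw [hsq]
    exact add_pos hef hef
  have horth : B (e + f) z = 0 := by rw [map_add, LinearMap.add_apply, hez, hfz, add_zero]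
  exact hB.eq_zero_of_orthogonal hpos horth hz

end HasHodgeIndex

theorem case9_genus2_component_general [IsStrictOrderedRing R] {B : LinearMap.BilinForm R V}
    (hB : HasHodgeIndex B) {K F Γ : V} (hKK : B K K = -2) (hKF : B K F = -2) (hFF : B F F = 0)
    (hKΓ : B K Γ = 2) (hFΓ : B F Γ = 4) (hΓΓ : B Γ Γ = 0) :
    2 • K + Γ = F := by
  have hFK : B F K = -2 := (hB.isSymm.eq K F).symm.trans hKF
  have hΓK : B Γ K = 2 := (hB.isSymm.eq K Γ).symm.trans hKΓ
  have hΓF : B Γ F = 4 := (hB.isSymm.eq F Γ).symm.trans hFΓ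
  have hKZ : B K (2 • K + Γ - F) = 0 := by
    rw [map_sub, map_add, map_nsmul, hKK, hKΓ, hKF]; norm_num
  have hFZ : B F (2 • K + Γ - F) = 0 := by
    rw [map_sub, map_add, map_nsmul, hFK, hFΓ, hFF]; norm_num
  have hΓZ : B Γ (2 • K + Γ - F) = 0 := by
    rw [map_sub, map_add, map_nsmul, hΓK, hΓΓ, hΓF]; norm_num
  have hZZ : B (2 • K + Γ - F) (2 • K + Γ - F) = 0 := by
    rw [map_sub B, map_add B, map_nsmul B, LinearMap.sub_apply, LinearMap.add_apply,
      LinearMap.smul_apply, hKZ, hΓZ, hFZ, smul_zero, add_zero, sub_zero]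
  have hpos : 0 < B F Γ := by rw [hFΓ]; exact four_pos
  exact sub_eq_zero.mp (hB.eq_zero_of_orthogonal_isotropic_pair hFF hΓΓ hpos hFZ hΓZ hZZ)

end HodgeIndex

section Minkowski

variable {n : ℕ}

/-- The Minkowski form `mink n` as a bundled bilinear form. -/
def minkForm (n : ℕ) : LinearMap.BilinForm ℝ (Fin (n + 1) → ℝ) :=
  LinearMap.mk₂ ℝ (mink n)
    (fun x y z ↦ by
      simp only [mink, Pi.add_apply, add_mul, Finset.sum_add_distrib, add_sub_add_comm])
    (fun c x y ↦ by
      simp only [mink, Pi.smul_apply, smul_eq_mul, mul_assoc, ← Finset.mul_sum, mul_sub])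
    (fun x y z ↦ by
      simp only [mink, Pi.add_apply, mul_add, Finset.sum_add_distrib, add_sub_add_comm])
    (fun c x y ↦ by
      simp only [mink, Pi.smul_apply, smul_eq_mul, mul_left_comm _ c, ← Finset.mul_sum, mul_sub])

theorem mink_comm (x y : Fin (n + 1) → ℝ) : mink n x y = mink n y x := by
  simp only [mink, mul_comm]

theorem mink_self (x : Fin (n + 1) → ℝ) :
    mink n x x = x 0 ^ 2 - ∑ i ∈ Finset.Ioi 0, x i ^ 2 := by
  simp only [mink, sq]

theorem mink_self_mul_sq_le_of_mink_eq_zero {x y : Fin (n + 1) → ℝ} (hxy : mink n x y = 0) :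
    mink n x x * y 0 ^ 2 ≤ -mink n y y * ∑ i ∈ Finset.Ioi 0, x i ^ 2 := by
  have hcauchy := Finset.sum_mul_sq_le_sq_mul_sq (Finset.Ioi 0) x y
  rw [← sub_eq_zero.mp hxy] at hcauchy
  rw [mink_self, mink_self]
  linarith

theorem eq_zero_of_mink_self_nonneg {x : Fin (n + 1) → ℝ} (hx₀ : x 0 = 0)
    (hx : 0 ≤ mink n x x) : x = 0 := by
  have hsum : ∑ i ∈ Finset.Ioi 0, x i ^ 2 = 0 := by
    refine le_antisymm ?_ (Finset.sum_nonneg fun i _ ↦ sq_nonneg (x i))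
    simpa [mink_self, hx₀] using hx
  rw [Finset.sum_eq_zero_iff_of_nonneg fun i _ ↦ sq_nonneg (x i)] at hsum
  funext i
  rcases eq_or_ne i 0 with rfl | hi
  · exact hx₀
  · exact sq_eq_zero_iff.mp (hsum i (Finset.mem_Ioi.mpr (Fin.pos_iff_ne_zero.mpr hi)))

theorem mink_self_neg_of_orthogonal {x y : Fin (n + 1) → ℝ} (hx : 0 < mink n x x)
    (hxy : mink n x y = 0) (hy : y ≠ 0) : mink n y y < 0 := by
  by_contra! hyy
  have hle : mink n x x * y 0 ^ 2 ≤ 0 :=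
    (mink_self_mul_sq_le_of_mink_eq_zero hxy).trans <|
      mul_nonpos_of_nonpos_of_nonneg (neg_nonpos.mpr hyy) (Finset.sum_nonneg fun i _ ↦ sq_nonneg _)
  have hy₀ : y 0 = 0 := (sq_nonpos_iff _).mp (nonpos_of_mul_nonpos_right hle hx)
  exact hy (eq_zero_of_mink_self_nonneg hy₀ hyy)

theorem hasHodgeIndex_minkForm (n : ℕ) : HasHodgeIndex (minkForm n) where
  isSymm := ⟨mink_comm⟩
  neg_of_orthogonal _ _ := mink_self_neg_of_orthogonal

end Minkowski

/-- Proposition 2.7 (case k = 9, genus-2 component with self-intersection 0):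
`Γ ≡ −2K_W + F`. -/
theorem case9_genus2_component (n : ℕ) (K D F Γ : Fin (n + 1) → ℝ)
    (hKK : mink n K K = -2) (hKD : mink n K D = 2) (hDD : mink n D D = 14)
    (hKF : mink n K F = -2) (hDF : mink n D F = 8) (hFF : mink n F F = 0)
    (hKΓ : mink n K Γ = 2) (hDΓ : mink n D Γ = 4) (hFΓ : mink n F Γ = 4)
    (hΓΓ : mink n Γ Γ = 0) :
    2 • K + Γ = F :=
  case9_genus2_component_general (hasHodgeIndex_minkForm n) hKK hKF hFF hKΓ hFΓ hΓΓ
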